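/- The following identity of absolutely convergent lattice sums holds: ∑'_{(m,k)} [ (m² − 15k²)/(m² + 15k²)³ + (5k² − 3m²)/(3m² + 5k²)³ ] = ∑'_{(m,k)} [ (1/2)(2m² + 2mk − 7k²)/(m² + mk + 4k²)³ + (1/2)(m² + 8mk + k²)/(2m² + mk + 2k²)³ ]. -/

import Mathlib

lemma aux_summable_base :
    Summable (fun p : ℤ × ℤ => 1 / (((p.1 : ℝ) ^ 2 + (p.2 : ℝ) ^ 2) ^ 2)) := by
  have h := EisensteinSeries.summable_one_div_norm_rpow (k := 4) (by norm_num)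
  have h2 : Summable (fun p : ℤ × ℤ => ‖(![p.1, p.2] : Fin 2 → ℤ)‖ ^ (-4 : ℝ)) := by
    have := (finTwoArrowEquiv ℤ).symm.summable_iff.mpr h
    simpa [Function.comp_def, finTwoArrowEquiv] using this
  refine Summable.of_nonneg_of_le (fun p => by positivity) (fun p => ?_) h2
  rcases eq_or_ne p 0 with rfl | hp
  · simp
  set N := ‖(![p.1, p.2] : Fin 2 → ℤ)‖ with hN
  have hle : N ^ 2 ≤ (p.1 : ℝ) ^ 2 + (p.2 : ℝ) ^ 2 := by
    have h1 : N ≤ √((p.1 : ℝ) ^ 2 + (p.2 : ℝ) ^ 2) := by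
      rw [hN, pi_norm_le_iff_of_nonneg (by positivity)]
      intro i
      fin_cases i
      · simp only [Fin.zero_eta, Matrix.cons_val_zero, Int.norm_eq_abs]
        apply Real.abs_le_sqrt
        nlinarith [sq_nonneg (p.2 : ℝ)]
      · simp only [Fin.mk_one, Matrix.cons_val_one, Int.norm_eq_abs]
        apply Real.abs_le_sqrt
        simp
        nlinarith [sq_nonneg (p.1 : ℝ)]
    calc N ^ 2 ≤ √((p.1 : ℝ) ^ 2 + (p.2 : ℝ) ^ 2) ^ 2 := by gcongr
      _ = _ := Real.sq_sqrt (by positivity)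
  have hNpos : 0 < N := by
    rw [hN, norm_pos_iff]
    intro h0
    apply hp
    have e0 := congrFun h0 0
    have e1 := congrFun h0 1
    simp at e0 e1
    exact Prod.ext e0 e1
  rw [Real.rpow_neg hNpos.le, ← one_div]
  have e4 : N ^ (4 : ℝ) = (N ^ 2) ^ 2 := by
    rw [← pow_mul]; exact_mod_cast Real.rpow_natCast N 4
  rw [e4]
  gcongr

lemma aux_summable (num Q : ℝ → ℝ → ℝ) (C c : ℝ) (hc : 0 < c)
    (hnum : ∀ x y, |num x y| ≤ C * (x ^ 2 + y ^ 2)) (hQ : ∀ x y, c * (x ^ 2 + y ^ 2) ≤ Q x y) :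
    Summable (fun p : ℤ × ℤ => num p.1 p.2 / (Q p.1 p.2) ^ 3) := by
  refine Summable.of_norm_bounded (aux_summable_base.mul_left (C / c ^ 3)) (fun p => ?_)
  have h1 := hnum p.1 p.2
  have h2 := hQ p.1 p.2
  set r := (p.1 : ℝ) ^ 2 + (p.2 : ℝ) ^ 2 with hr
  have hr0 : 0 ≤ r := by positivity
  rcases hr0.eq_or_lt with h0 | h0
  · rw [← h0] at h1
    have : num p.1 p.2 = 0 := by
      apply abs_eq_zero.mp
      exact le_antisymm (by simpa using h1) (abs_nonneg _)
    rw [this, ← h0]; simp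
  · have hq : 0 < Q p.1 p.2 := lt_of_lt_of_le (by positivity) h2
    rw [Real.norm_eq_abs, abs_div, abs_of_pos (pow_pos hq 3)]
    calc |num p.1 p.2| / Q p.1 p.2 ^ 3 ≤ (C * r) / (c * r) ^ 3 := by
          have := (abs_nonneg _).trans h1
          gcongr
      _ = C / c ^ 3 * (1 / r ^ 2) := by field_simp

lemma aux_equiv (h h' : ℤ × ℤ → ℝ) (e e' : ℤ × ℤ → ℤ × ℤ)
    (h1 : ∀ m k, e' (e (m, k)) = (m, k)) (h2 : ∀ m k, e (e' (m, k)) = (m, k))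
    (H : ∀ m k, h (e (m, k)) = h' (m, k)) : ∑' p, h p = ∑' p, h' p := by
  let E : ℤ × ℤ ≃ ℤ × ℤ := ⟨e, e', fun p => h1 p.1 p.2, fun p => h2 p.1 p.2⟩
  rw [← E.tsum_eq h]
  exact tsum_congr (fun p => H p.1 p.2)

lemma aux_split (h : ℤ × ℤ → ℝ) (hs : Summable h) :
    ∑' p, h p = ∑' p : ℤ × ℤ, h (p.1, 2 * p.2) + ∑' p : ℤ × ℤ, h (p.1, 2 * p.2 + 1) := by
  let i : ℤ × ℤ → ℤ × ℤ := fun p => (p.1, 2 * p.2)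
  let j : ℤ × ℤ → ℤ × ℤ := fun p => (p.1, 2 * p.2 + 1)
  have hi : Function.Injective i := by
    rintro ⟨a, b⟩ ⟨c, d⟩ h
    simp only [i, Prod.mk.injEq] at h
    ext <;> simp <;> omega
  have hj : Function.Injective j := by
    rintro ⟨a, b⟩ ⟨c, d⟩ h
    simp only [j, Prod.mk.injEq] at h
    ext <;> simp <;> omega
  have hc : IsCompl (Set.range i) (Set.range j) := by
    constructor
    · rw [Set.disjoint_iff]
      rintro _ ⟨⟨p, rfl⟩, ⟨q, hq⟩⟩
      simp only [i, j, Prod.mk.injEq] at hq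
      omega
    · rw [codisjoint_iff, Set.top_eq_univ, Set.eq_univ_iff_forall]
      rintro ⟨a, b⟩
      rcases Int.even_or_odd' b with ⟨c, rfl | rfl⟩
      · exact Or.inl ⟨(a, c), rfl⟩
      · exact Or.inr ⟨(a, c), rfl⟩
  have a1 := hi.hasSum_range_iff.mpr (hs.comp_injective hi).hasSum
  have a2 := hj.hasSum_range_iff.mpr (hs.comp_injective hj).hasSum
  exact (a1.add_isCompl hc a2).tsum_eq

lemma aux_split' (h : ℤ × ℤ → ℝ) (hs : Summable h) :
    ∑' p, h p = ∑' p : ℤ × ℤ, h (2 * p.1, p.2) + ∑' p : ℤ × ℤ, h (2 * p.1 + 1, p.2) := by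
  have := aux_split (fun p => h (p.2, p.1)) ((Equiv.prodComm ℤ ℤ).summable_iff.mpr hs)
  rw [aux_equiv h (fun p => h (p.2, p.1)) (fun p => (p.2, p.1)) (fun p => (p.2, p.1))
    (by simp) (by simp) (by simp), this]
  congr 1 <;>
  exact aux_equiv _ _ (fun p => (p.2, p.1)) (fun p => (p.2, p.1))
    (by simp) (by simp) (by simp)

noncomputable def auxF (p : ℤ × ℤ) : ℝ :=
  (1 / 2) * (2 * (p.1 : ℝ) ^ 2 + 2 * (p.1 : ℝ) * (p.2 : ℝ) - 7 * (p.2 : ℝ) ^ 2) /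
    ((p.1 : ℝ) ^ 2 + (p.1 : ℝ) * (p.2 : ℝ) + 4 * (p.2 : ℝ) ^ 2) ^ 3

noncomputable def auxG (p : ℤ × ℤ) : ℝ :=
  (1 / 2) * ((p.1 : ℝ) ^ 2 + 8 * (p.1 : ℝ) * (p.2 : ℝ) + (p.2 : ℝ) ^ 2) /
    (2 * (p.1 : ℝ) ^ 2 + (p.1 : ℝ) * (p.2 : ℝ) + 2 * (p.2 : ℝ) ^ 2) ^ 3

lemma auxF_summable : Summable auxF := by
  refine aux_summable (fun x y => (1 / 2) * (2 * x ^ 2 + 2 * x * y - 7 * y ^ 2))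
    (fun x y => x ^ 2 + x * y + 4 * y ^ 2) 10 (1 / 2) (by norm_num) ?_ ?_ <;> intro x y
  · rw [abs_le]
    constructor <;> nlinarith [sq_nonneg (x + y), sq_nonneg (x - y)]
  · nlinarith [sq_nonneg (x + y), sq_nonneg (x - y)]

lemma auxG_summable : Summable auxG := by
  refine aux_summable (fun x y => (1 / 2) * (x ^ 2 + 8 * x * y + y ^ 2))
    (fun x y => 2 * x ^ 2 + x * y + 2 * y ^ 2) 10 (1 / 2) (by norm_num) ?_ ?_ <;> intro x y
  · rw [abs_le]
    constructor <;> nlinarith [sq_nonneg (x + y), sq_nonneg (x - y)]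
  · nlinarith [sq_nonneg (x + y), sq_nonneg (x - y)]

lemma aux_inj (a b : ℤ) (h : ℤ × ℤ → ℝ) (hs : Summable h) (c d : ℤ) (ha : a ≠ 0) (hb : b ≠ 0) :
    Summable (fun p : ℤ × ℤ => h (a * p.1 + c, b * p.2 + d)) := by
  refine hs.comp_injective (i := fun p : ℤ × ℤ => (a * p.1 + c, b * p.2 + d)) ?_
  rintro ⟨x, y⟩ ⟨z, w⟩ h
  simpa [ha, hb] using h

lemma auxF_conj (m k : ℤ) : auxF (m + k, -k) = auxF (m, k) := by
  simp only [auxF]; push_cast; congr 1 <;> ring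

lemma auxG_swap (m k : ℤ) : auxG (k, m) = auxG (m, k) := by
  simp only [auxG]; congr 1 <;> ring

lemma auxF_two (m k : ℤ) : auxF (2 * m, 2 * k) = 1 / 16 * auxF (m, k) := by
  simp only [auxF]; push_cast
  rw [show (2 * (m : ℝ)) ^ 2 + 2 * (m : ℝ) * (2 * k) + 4 * (2 * (k : ℝ)) ^ 2
    = 4 * ((m : ℝ) ^ 2 + m * k + 4 * (k : ℝ) ^ 2) by ring]
  generalize ((m : ℝ) ^ 2 + m * k + 4 * (k : ℝ) ^ 2) = D
  simp only [div_eq_mul_inv, mul_inv, mul_pow]; ring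

lemma auxG_two (m k : ℤ) : auxG (2 * m, 2 * k) = 1 / 16 * auxG (m, k) := by
  simp only [auxG]; push_cast
  rw [show 2 * (2 * (m : ℝ)) ^ 2 + 2 * (m : ℝ) * (2 * k) + 2 * (2 * (k : ℝ)) ^ 2
    = 4 * (2 * (m : ℝ) ^ 2 + m * k + 2 * (k : ℝ) ^ 2) by ring]
  generalize (2 * (m : ℝ) ^ 2 + m * k + 2 * (k : ℝ) ^ 2) = D
  simp only [div_eq_mul_inv, mul_inv, mul_pow]; ring

/-- symmetrised relation -/
lemma auxFG (m k : ℤ) : auxF (2 * m, k) + auxF (2 * k, m) = 1 / 8 * auxG (m, k) := by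
  simp only [auxF, auxG]; push_cast
  rw [show (2 * (m : ℝ)) ^ 2 + 2 * (m : ℝ) * k + 4 * (k : ℝ) ^ 2
    = 2 * (2 * (m : ℝ) ^ 2 + m * k + 2 * (k : ℝ) ^ 2) by ring,
    show (2 * (k : ℝ)) ^ 2 + 2 * (k : ℝ) * m + 4 * (m : ℝ) ^ 2
    = 2 * (2 * (m : ℝ) ^ 2 + m * k + 2 * (k : ℝ) ^ 2) by ring]
  generalize (2 * (m : ℝ) ^ 2 + m * k + 2 * (k : ℝ) ^ 2) = D
  simp only [div_eq_mul_inv, mul_inv, mul_pow]; ring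

lemma auxGF (m k : ℤ) : auxG (2 * k, m) + auxG (2 * -k, m + k) = 1 / 8 * auxF (m, k) := by
  simp only [auxF, auxG]; push_cast
  rw [show 2 * (2 * (k : ℝ)) ^ 2 + 2 * (k : ℝ) * m + 2 * (m : ℝ) ^ 2
    = 2 * ((m : ℝ) ^ 2 + m * k + 4 * (k : ℝ) ^ 2) by ring,
    show 2 * (2 * -(k : ℝ)) ^ 2 + 2 * -(k : ℝ) * (m + k) + 2 * ((m : ℝ) + k) ^ 2
    = 2 * ((m : ℝ) ^ 2 + m * k + 4 * (k : ℝ) ^ 2) by ring]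
  generalize ((m : ℝ) ^ 2 + m * k + 4 * (k : ℝ) ^ 2) = D
  simp only [div_eq_mul_inv, mul_inv, mul_pow]; ring

/-- half-lattice sum of `auxF` -/
lemma auxF_half : ∑' p : ℤ × ℤ, auxF (2 * p.1, p.2) = 1 / 16 * ∑' p, auxG p := by
  have hs : Summable (fun p : ℤ × ℤ => auxF (2 * p.1, p.2)) := by
    simpa using aux_inj 2 1 auxF auxF_summable 0 0 (by norm_num) (by norm_num)
  have hs' : Summable (fun p : ℤ × ℤ => auxF (2 * p.2, p.1)) :=
    (Equiv.prodComm ℤ ℤ).summable_iff.mpr hs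
  have e : ∑' p : ℤ × ℤ, auxF (2 * p.1, p.2) = ∑' p : ℤ × ℤ, auxF (2 * p.2, p.1) :=
    aux_equiv _ _ (fun p => (p.2, p.1)) (fun p => (p.2, p.1)) (by simp) (by simp) (by simp)
  have t := hs.tsum_add hs'
  rw [tsum_congr (fun p : ℤ × ℤ => auxFG p.1 p.2), tsum_mul_left] at t
  simp only [Prod.mk.eta] at t
  linarith

lemma auxG_half : ∑' p : ℤ × ℤ, auxG (2 * p.1, p.2) = 1 / 16 * ∑' p, auxF p := by
  have hs : Summable (fun p : ℤ × ℤ => auxG (2 * p.1, p.2)) := by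
    simpa using aux_inj 2 1 auxG auxG_summable 0 0 (by norm_num) (by norm_num)
  have hs1 : Summable (fun p : ℤ × ℤ => auxG (2 * p.2, p.1)) :=
    (Equiv.prodComm ℤ ℤ).summable_iff.mpr hs
  have hs2 : Summable (fun p : ℤ × ℤ => auxG (2 * -p.2, p.1 + p.2)) := by
    refine hs1.comp_injective (i := fun p : ℤ × ℤ => (p.1 + p.2, -p.2)) ?_
    rintro ⟨x, y⟩ ⟨z, w⟩ h
    simp only [Prod.mk.injEq] at h
    ext <;> simp <;> omega
  have e1 : ∑' p : ℤ × ℤ, auxG (2 * p.1, p.2) = ∑' p : ℤ × ℤ, auxG (2 * p.2, p.1) :=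
    aux_equiv _ _ (fun p => (p.2, p.1)) (fun p => (p.2, p.1)) (by simp) (by simp) (by simp)
  have e2 : ∑' p : ℤ × ℤ, auxG (2 * p.1, p.2) = ∑' p : ℤ × ℤ, auxG (2 * -p.2, p.1 + p.2) :=
    aux_equiv _ _ (fun p => (-p.2, p.1 + p.2)) (fun p => (p.2 + p.1, -p.1))
      (by simp) (by simp) (by simp)
  have t := hs1.tsum_add hs2
  rw [tsum_congr (fun p : ℤ × ℤ => auxGF p.1 p.2), tsum_mul_left] at t
  simp only [Prod.mk.eta] at t
  linarith

lemma auxF_odd : ∑' p : ℤ × ℤ, auxF (2 * p.1, 2 * p.2 + 1)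
    = 1 / 16 * ∑' p, auxG p - 1 / 16 * ∑' p, auxF p := by
  have hs : Summable (fun p : ℤ × ℤ => auxF (2 * p.1, p.2)) := by
    simpa using aux_inj 2 1 auxF auxF_summable 0 0 (by norm_num) (by norm_num)
  have t := aux_split _ hs
  simp only [auxF_two, auxF_half, tsum_mul_left] at t
  linarith

lemma auxG_odd : ∑' p : ℤ × ℤ, auxG (2 * p.1, 2 * p.2 + 1)
    = 1 / 16 * ∑' p, auxF p - 1 / 16 * ∑' p, auxG p := by
  have hs : Summable (fun p : ℤ × ℤ => auxG (2 * p.1, p.2)) := by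
    simpa using aux_inj 2 1 auxG auxG_summable 0 0 (by norm_num) (by norm_num)
  have t := aux_split _ hs
  simp only [auxG_two, auxG_half, tsum_mul_left] at t
  linarith

lemma auxF_main : ∑' p : ℤ × ℤ, auxF (p.1 - p.2, 2 * p.2)
    = ∑' p, auxF p - 2 * ∑' p : ℤ × ℤ, auxF (2 * p.1, 2 * p.2 + 1) := by
  have t := aux_split _ auxF_summable
  have hs : Summable (fun p : ℤ × ℤ => auxF (p.1, 2 * p.2 + 1)) := by
    simpa using aux_inj 1 2 auxF auxF_summable 0 1 (by norm_num) (by norm_num)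
  have t2 := aux_split' _ hs
  have e1 : ∑' p : ℤ × ℤ, auxF (p.1 - p.2, 2 * p.2) = ∑' p : ℤ × ℤ, auxF (p.1, 2 * p.2) :=
    aux_equiv _ _ (fun p => (p.1 + p.2, p.2)) (fun p => (p.1 - p.2, p.2))
      (by simp) (by simp) (by simp)
  have e2 : ∑' p : ℤ × ℤ, auxF (2 * p.1, 2 * p.2 + 1)
      = ∑' p : ℤ × ℤ, auxF (2 * p.1 + 1, 2 * p.2 + 1) := by
    refine aux_equiv _ _ (fun p => (p.1 + p.2 + 1, -p.2 - 1)) (fun p => (p.1 + p.2, -p.2 - 1))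
      ?_ ?_ ?_
    · intro m k; ext <;> simp <;> ring
    · intro m k; ext <;> simp <;> ring
    · intro m k
      rw [← auxF_conj (2 * m + 1)]
      congr 2 <;> ring
  simp only at t2
  linarith

lemma auxG_main : ∑' p : ℤ × ℤ, auxG (p.1 + p.2, p.2 - p.1)
    = ∑' p, auxG p - 2 * ∑' p : ℤ × ℤ, auxG (2 * p.1, 2 * p.2 + 1) := by
  have hsh : Summable (fun p : ℤ × ℤ => auxG (p.1, p.2 - p.1)) := by
    refine auxG_summable.comp_injective (i := fun p : ℤ × ℤ => (p.1, p.2 - p.1)) ?_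
    rintro ⟨x, y⟩ ⟨z, w⟩ h
    simp only [Prod.mk.injEq] at h
    ext <;> simp <;> omega
  have t := aux_split _ hsh
  have hs := aux_inj 1 2 _ hsh 0 1 (by norm_num) (by norm_num)
  simp only [one_mul, add_zero] at hs
  have t2 := aux_split' _ hs
  have e0 : ∑' p, auxG p = ∑' p : ℤ × ℤ, auxG (p.1, p.2 - p.1) :=
    aux_equiv _ _ (fun p => (p.1, p.2 - p.1)) (fun p => (p.1, p.2 + p.1))
      (by simp) (by simp) (by simp)
  have e1 : ∑' p : ℤ × ℤ, auxG (p.1 + p.2, p.2 - p.1)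
      = ∑' p : ℤ × ℤ, auxG (p.1, 2 * p.2 - p.1) := by
    refine aux_equiv _ _ (fun p => (p.1 - p.2, p.2)) (fun p => (p.1 + p.2, p.2))
      (by simp) (by simp) ?_
    intro m k; congr 2 <;> ring
  have e2 : ∑' p : ℤ × ℤ, auxG (2 * p.1, 2 * p.2 + 1)
      = ∑' p : ℤ × ℤ, auxG (2 * p.1, 2 * p.2 + 1 - 2 * p.1) := by
    refine aux_equiv _ _ (fun p => (p.1, p.2 - p.1)) (fun p => (p.1, p.2 + p.1))
      (by simp) (by simp) ?_
    intro m k; congr 2; ring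
  have e3 : ∑' p : ℤ × ℤ, auxG (2 * p.1, 2 * p.2 + 1)
      = ∑' p : ℤ × ℤ, auxG (2 * p.1 + 1, 2 * p.2 + 1 - (2 * p.1 + 1)) := by
    refine aux_equiv _ _ (fun p => (p.2 - p.1, p.1)) (fun p => (p.2, p.1 + p.2))
      (by simp) (by simp) ?_
    intro m k
    rw [← auxG_swap]
    congr 2; ring
  simp only at t t2
  linarith

lemma aux_sub (h : ℤ × ℤ → ℝ) (h0 : h 0 = 0) :
    ∑' p : {p : ℤ × ℤ // p ≠ 0}, h p.1 = ∑' p, h p := by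
  refine tsum_subtype_eq_of_support_subset (s := {p : ℤ × ℤ | p ≠ 0}) ?_
  intro p hp h1
  exact hp (h1 ▸ h0)

/-- Proposition 2 of the paper: an identity between two lattice sums over
`(m,k) ∈ ℤ² ∖ {(0,0)}`. -/
theorem lattice_sum_identity :
    (∑' p : {p : ℤ × ℤ // p ≠ 0},
        (((p.1.1 : ℝ) ^ 2 - 15 * (p.1.2 : ℝ) ^ 2) /
            ((p.1.1 : ℝ) ^ 2 + 15 * (p.1.2 : ℝ) ^ 2) ^ 3 +
          (5 * (p.1.2 : ℝ) ^ 2 - 3 * (p.1.1 : ℝ) ^ 2) /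
            (3 * (p.1.1 : ℝ) ^ 2 + 5 * (p.1.2 : ℝ) ^ 2) ^ 3)) =
      ∑' p : {p : ℤ × ℤ // p ≠ 0},
        ((1 / 2) * (2 * (p.1.1 : ℝ) ^ 2 + 2 * (p.1.1 : ℝ) * (p.1.2 : ℝ) -
              7 * (p.1.2 : ℝ) ^ 2) /
            ((p.1.1 : ℝ) ^ 2 + (p.1.1 : ℝ) * (p.1.2 : ℝ) + 4 * (p.1.2 : ℝ) ^ 2) ^ 3 +
          (1 / 2) * ((p.1.1 : ℝ) ^ 2 + 8 * (p.1.1 : ℝ) * (p.1.2 : ℝ) + (p.1.2 : ℝ) ^ 2) /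
            (2 * (p.1.1 : ℝ) ^ 2 + (p.1.1 : ℝ) * (p.1.2 : ℝ) + 2 * (p.1.2 : ℝ) ^ 2) ^ 3) := by
  have hA : Summable (fun p : ℤ × ℤ => auxF (p.1 - p.2, 2 * p.2)) := by
    refine auxF_summable.comp_injective (i := fun p : ℤ × ℤ => (p.1 - p.2, 2 * p.2)) ?_
    rintro ⟨x, y⟩ ⟨z, w⟩ h
    simp only [Prod.mk.injEq] at h
    ext <;> simp <;> omega
  have hB : Summable (fun p : ℤ × ℤ => auxG (p.1 + p.2, p.2 - p.1)) := by
    refine auxG_summable.comp_injective (i := fun p : ℤ × ℤ => (p.1 + p.2, p.2 - p.1)) ?_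
    rintro ⟨x, y⟩ ⟨z, w⟩ h
    simp only [Prod.mk.injEq] at h
    ext <;> simp <;> omega
  have L := aux_sub (fun p => auxF (p.1 - p.2, 2 * p.2) + auxG (p.1 + p.2, p.2 - p.1))
    (by simp [auxF, auxG])
  have R := aux_sub (fun p => auxF p + auxG p) (by simp [auxF, auxG])
  rw [hA.tsum_add hB, auxF_main, auxG_main, auxF_odd, auxG_odd] at L
  rw [auxF_summable.tsum_add auxG_summable] at R
  refine Eq.trans (tsum_congr fun p => ?_) ((L.trans ?_).trans R.symm)
  · simp only [auxF, auxG]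
    push_cast
    congr 2 <;> ring
  · ring
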